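/- For all integers k > ℓ ≥ 1 there exists a constant c_{k,ℓ} > 0 such that the following holds. Let H : ℕ → ℕ be any function with H(X) → ∞ as X → ∞ and H(X) ≤ X·(log X)^{−c_{k,ℓ}} for all sufficiently large X. Then, with 𝔼_f the Steinhaus expectation at level y = X + H(X) and A_H(f,x) := H(X)^{-1/2} ∑_{x < n ≤ x+H(X)} f(n), one has 𝔼_f | (1/X) ∑_{x=1}^{X} A_H(f,x)^k · conj(A_H(f,x))^ℓ |² → 0 as X → ∞, where conj denotes complex conjugation. -/

import Mathlib

open MeasureTheory

/-- The Steinhaus probability space at level `y`: a uniform random point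
`ω p ∈ [0,1]` for each coordinate `p ≤ y` (only the prime coordinates are used);
the random multiplicative function has `f(p) = e^{2πi ω(p)}`, which is uniformly
distributed on the unit circle, independently over primes `p ≤ y`. -/
noncomputable def steinhausMeasure (y : ℕ) : Measure (Fin (y + 1) → ℝ) :=
  Measure.pi fun _ => volume.restrict (Set.Ioc (0 : ℝ) 1)

/-- The Steinhaus random completely multiplicative function at level `y`:
`f_ω(n) = ∏_{p ≤ y prime} e^{2πi ω(p) v_p(n)}`. -/
noncomputable def steinhausF (y : ℕ) (ω : Fin (y + 1) → ℝ) (n : ℕ) : ℂ :=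
  ∏ p ∈ (Finset.range (y + 1)).attach,
    if Nat.Prime (p : ℕ) then
      Complex.exp
        (((2 * Real.pi * ω ⟨(p : ℕ), Finset.mem_range.mp p.2⟩ *
            (padicValNat (p : ℕ) n : ℝ) : ℝ) : ℂ) * Complex.I)
    else 1

/-- `A_H(f, x) = H(X)^{-1/2} ∑_{x < n ≤ x + H(X)} f(n)` at level `y = X + H(X)`. -/
noncomputable def AHf (X : ℕ) (H : ℕ → ℕ) (ω : Fin (X + H X + 1) → ℝ) (x : ℕ) : ℂ :=
  ((Real.sqrt (H X) : ℂ))⁻¹ * ∑ n ∈ Finset.Ioc x (x + H X), steinhausF (X + H X) ω n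

/-!
Expanding the square, the second moment of `∑ x, S x ^ k * conj (S x) ^ l`, where `S x` is the sum
of the Steinhaus function over `(x, x + h]`, counts by orthogonality the solutions of
`∏ a = ∏ b` in which `a` has `k` factors in `(x, x + h]` and `l` in `(x', x' + h]`, while `b` has
`k` factors in `(x', x' + h]` and `l` in `(x, x + h]`. The two products have sizes about
`x ^ k * x' ^ l` and `x' ^ k * x ^ l`, so when `k ≠ l` a solution forces `x` and `x'` to lie within
`O(h)` of each other, unless one of them is below `h`. Only about `h * X` of the `X ^ 2` pairs
survive. On these the divisor bound, averaged through the moments of the divisor function, gives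
about `h ^ (k + l)` solutions per pair up to a power of `log X`. After normalization the second
moment is at most `h / X` times a power of `log X`.
-/

open Filter Finset

section Steinhaus

variable (y : ℕ) (ω : Fin (y + 1) → ℝ)

lemma steinhausF_eq_prod (n : ℕ) :
    steinhausF y ω n = ∏ i : Fin (y + 1), if Nat.Prime (i : ℕ) then
      Complex.exp (((2 * Real.pi * ω i * (padicValNat (i : ℕ) n : ℝ) : ℝ) : ℂ) * Complex.I)
      else 1 := by
  let g (p : ℕ) : ℂ := if h : p < y + 1 then
    (if Nat.Prime p then
      Complex.exp (((2 * Real.pi * ω ⟨p, h⟩ * (padicValNat p n : ℝ) : ℝ) : ℂ) * Complex.I)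
      else 1) else 1
  calc steinhausF y ω n = ∏ p ∈ (range (y + 1)).attach, g p :=
        prod_congr rfl fun p _ => by simp only [g, dif_pos (mem_range.mp p.2)]
    _ = ∏ i : Fin (y + 1), g i := by rw [prod_attach _ g, prod_range]
    _ = _ := prod_congr rfl fun i _ => by simp only [g, dif_pos i.2]

lemma steinhausF_one : steinhausF y ω 1 = 1 := by
  simp [steinhausF_eq_prod]

lemma steinhausF_mul {a b : ℕ} (ha : a ≠ 0) (hb : b ≠ 0) :
    steinhausF y ω (a * b) = steinhausF y ω a * steinhausF y ω b := by
  simp only [steinhausF_eq_prod, ← prod_mul_distrib]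
  refine prod_congr rfl fun i _ => ?_
  split_ifs with hp
  · have : Fact (Nat.Prime (i : ℕ)) := ⟨hp⟩
    rw [padicValNat.mul ha hb, ← Complex.exp_add]
    congr 1
    push_cast
    ring
  · simp

lemma steinhausF_prod {ι : Type*} (s : Finset ι) {a : ι → ℕ} (ha : ∀ i ∈ s, a i ≠ 0) :
    steinhausF y ω (∏ i ∈ s, a i) = ∏ i ∈ s, steinhausF y ω (a i) := by
  induction s using Finset.cons_induction with
  | empty => simp [steinhausF_one]
  | cons i s hi ih =>
    rw [forall_mem_cons] at ha
    rw [prod_cons, prod_cons, steinhausF_mul y ω ha.1 (prod_ne_zero_iff.mpr ha.2), ih ha.2]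

lemma norm_steinhausF (n : ℕ) : ‖steinhausF y ω n‖ = 1 := by
  rw [steinhausF_eq_prod, norm_prod]
  refine prod_eq_one fun i _ => ?_
  split_ifs
  · exact Complex.norm_exp_ofReal_mul_I _
  · simp

lemma steinhausF_mul_conj (a b : ℕ) :
    steinhausF y ω a * starRingEnd ℂ (steinhausF y ω b) =
      ∏ i : Fin (y + 1), if Nat.Prime (i : ℕ) then
        Complex.exp (2 * Real.pi * ((padicValNat i a - padicValNat i b : ℤ) : ℂ) *
          Complex.I * ω i) else 1 := by
  rw [steinhausF_eq_prod, steinhausF_eq_prod, map_prod, ← prod_mul_distrib]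
  refine prod_congr rfl fun i _ => ?_
  split_ifs
  · rw [← Complex.exp_conj, ← Complex.exp_add, map_mul, Complex.conj_ofReal, Complex.conj_I]
    congr 1
    simp only [Complex.ofReal_mul, Complex.ofReal_natCast, Complex.ofReal_ofNat, Int.cast_sub,
      Int.cast_natCast]
    ring
  · simp

lemma continuous_steinhausF (n : ℕ) : Continuous fun ω => steinhausF y ω n := by
  simp only [steinhausF_eq_prod]
  refine continuous_finsetProd _ fun i _ => ?_
  split_ifs <;> fun_prop

end Steinhaus

section Orthogonality

instance (y : ℕ) : IsProbabilityMeasure (steinhausMeasure y) := by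
  have : IsProbabilityMeasure (volume.restrict (Set.Ioc (0 : ℝ) 1)) := ⟨by simp⟩
  unfold steinhausMeasure
  infer_instance

lemma integrable_steinhausF_mul_conj (y a b : ℕ) :
    Integrable (fun ω => steinhausF y ω a * starRingEnd ℂ (steinhausF y ω b))
      (steinhausMeasure y) := by
  refine Integrable.of_bound (C := 1) ?_ (ae_of_all _ fun ω => ?_)
  · exact ((continuous_steinhausF y a).mul
      (Complex.continuous_conj.comp (continuous_steinhausF y b))).aestronglyMeasurable
  · simp [norm_steinhausF]

lemma integral_exp_two_pi_mul_int_mul_I {m : ℤ} (hm : m ≠ 0) :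
    ∫ t in Set.Ioc (0 : ℝ) 1, Complex.exp (2 * Real.pi * m * Complex.I * t) = 0 := by
  have hc : (2 * Real.pi * m * Complex.I : ℂ) ≠ 0 := by
    simp [hm, Real.pi_ne_zero]
  have hm_comm : (2 * Real.pi * m * Complex.I : ℂ) = m * (2 * Real.pi * Complex.I) := by ring
  rw [← intervalIntegral.integral_of_le zero_le_one, integral_exp_mul_complex hc]
  simp [hm_comm, Complex.exp_int_mul_two_pi_mul_I]

lemma integral_steinhausF_mul_conj {y a b : ℕ} (ha : a ∈ Nat.smoothNumbers (y + 1))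
    (hb : b ∈ Nat.smoothNumbers (y + 1)) :
    ∫ ω, steinhausF y ω a * starRingEnd ℂ (steinhausF y ω b) ∂steinhausMeasure y =
      if a = b then 1 else 0 := by
  split_ifs with hab
  · subst hab
    simp [Complex.mul_conj, Complex.normSq_eq_norm_sq, norm_steinhausF]
  obtain ⟨p, hp, hne⟩ : ∃ p, p.Prime ∧ padicValNat p a ≠ padicValNat p b := by
    by_contra! h
    exact hab ((Nat.eq_iff_prime_padicValNat_eq a b ha.1 hb.1).mpr h)
  have hpy : p < y + 1 := by
    by_contra hpy
    have hpa : ¬ p ∣ a := fun h => hpy (Nat.mem_smoothNumbers'.mp ha p hp h)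
    have hpb : ¬ p ∣ b := fun h => hpy (Nat.mem_smoothNumbers'.mp hb p hp h)
    exact hne (by rw [padicValNat.eq_zero_of_not_dvd hpa, padicValNat.eq_zero_of_not_dvd hpb])
  let φ (i : Fin (y + 1)) (t : ℝ) : ℂ := if Nat.Prime (i : ℕ) then
    Complex.exp (2 * Real.pi * ((padicValNat i a - padicValNat i b : ℤ) : ℂ) *
      Complex.I * t) else 1
  calc ∫ ω, steinhausF y ω a * starRingEnd ℂ (steinhausF y ω b) ∂steinhausMeasure y
      = ∫ ω, ∏ i, φ i (ω i) ∂steinhausMeasure y := by simp only [steinhausF_mul_conj, φ]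
    _ = ∏ i, ∫ t in Set.Ioc (0 : ℝ) 1, φ i t := integral_fintype_prod_eq_prod φ
    _ = 0 := by
        refine prod_eq_zero (mem_univ ⟨p, hpy⟩) ?_
        simp only [φ, hp, if_true]
        exact integral_exp_two_pi_mul_int_mul_I (by omega)

lemma integrable_sum_steinhausF_mul_conj_sum {ι κ : Type*} (y : ℕ) (s : Finset ι) (t : Finset κ)
    (u : ι → ℕ) (v : κ → ℕ) :
    Integrable (fun ω => (∑ i ∈ s, steinhausF y ω (u i)) *
      starRingEnd ℂ (∑ j ∈ t, steinhausF y ω (v j))) (steinhausMeasure y) := by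
  simp only [map_sum, sum_mul_sum]
  exact integrable_finsetSum _ fun i _ => integrable_finsetSum _ fun j _ =>
    integrable_steinhausF_mul_conj y (u i) (v j)

lemma integral_sum_steinhausF_mul_conj_sum {ι κ : Type*} {y : ℕ} {s : Finset ι} {t : Finset κ}
    {u : ι → ℕ} {v : κ → ℕ} (hu : ∀ i ∈ s, u i ∈ Nat.smoothNumbers (y + 1))
    (hv : ∀ j ∈ t, v j ∈ Nat.smoothNumbers (y + 1)) :
    ∫ ω, (∑ i ∈ s, steinhausF y ω (u i)) * starRingEnd ℂ (∑ j ∈ t, steinhausF y ω (v j))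
        ∂steinhausMeasure y = #{p ∈ s ×ˢ t | u p.1 = v p.2} := by
  simp only [map_sum, sum_mul_sum, ← sum_product']
  rw [integral_finsetSum _ fun p _ => integrable_steinhausF_mul_conj y (u p.1) (v p.2),
    card_filter, Nat.cast_sum]
  refine sum_congr rfl fun p hp => ?_
  rw [mem_product] at hp
  rw [integral_steinhausF_mul_conj (hu _ hp.1) (hv _ hp.2)]
  push_cast
  rfl

lemma integral_norm_sum_sq {Ω σ : Type*} [MeasurableSpace Ω] {μ : Measure Ω} {s : Finset σ}
    {Z : σ → Ω → ℂ}
    (hZ : ∀ x ∈ s, ∀ x' ∈ s, Integrable (fun ω => Z x ω * starRingEnd ℂ (Z x' ω)) μ) :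
    ((∫ ω, ‖∑ x ∈ s, Z x ω‖ ^ 2 ∂μ : ℝ) : ℂ) =
      ∑ x ∈ s, ∑ x' ∈ s, ∫ ω, Z x ω * starRingEnd ℂ (Z x' ω) ∂μ := by
  rw [← integral_complex_ofReal]
  simp only [Complex.ofReal_pow, ← Complex.mul_conj', map_sum, sum_mul_sum]
  rw [integral_finsetSum _ fun x hx => integrable_finsetSum _ (hZ x hx)]
  exact sum_congr rfl fun x hx => integral_finsetSum _ (hZ x hx)

end Orthogonality

section SwapSolutions

/-- The box with `k` coordinates in `I` and `l` coordinates in `I'`, whose points `a` index the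
terms of the expansion of `(∑ n ∈ I, f n) ^ k * (∑ n ∈ I', f n) ^ l`. -/
def powerBox (k l : ℕ) (I I' : Finset ℕ) : Finset (Fin k ⊕ Fin l → ℕ) :=
  Fintype.piFinset (Sum.elim (fun _ => I) fun _ => I')

/-- The solutions of `∏ a = ∏ b` where `a` has `k` factors in `I` and `l` in `I'`, and `b` has `k`
factors in `I'` and `l` in `I`. They index the terms surviving in the second moment. -/
def swapSolutions (k l : ℕ) (I I' : Finset ℕ) :
    Finset ((Fin k ⊕ Fin l → ℕ) × (Fin k ⊕ Fin l → ℕ)) :=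
  {p ∈ powerBox k l I I' ×ˢ powerBox k l I' I | ∏ i, p.1 i = ∏ i, p.2 i}

variable {k l : ℕ} {I I' : Finset ℕ}

lemma mem_powerBox {a : Fin k ⊕ Fin l → ℕ} :
    a ∈ powerBox k l I I' ↔ (∀ i, a (Sum.inl i) ∈ I) ∧ ∀ j, a (Sum.inr j) ∈ I' := by
  simp [powerBox]

lemma forall_of_mem_powerBox {a : Fin k ⊕ Fin l → ℕ} {P : ℕ → Prop} (hI : ∀ n ∈ I, P n)
    (hI' : ∀ n ∈ I', P n) (ha : a ∈ powerBox k l I I') (i : Fin k ⊕ Fin l) : P (a i) := by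
  rw [mem_powerBox] at ha
  rcases i with i | j
  · exact hI _ (ha.1 i)
  · exact hI' _ (ha.2 j)

lemma sum_powerBox_prod {R : Type*} [CommSemiring R] (k l : ℕ) (I I' : Finset ℕ) (f : ℕ → R) :
    ∑ a ∈ powerBox k l I I', ∏ i, f (a i) = (∑ n ∈ I, f n) ^ k * (∑ n ∈ I', f n) ^ l := by
  rw [powerBox, ← prod_univ_sum]
  simp [Fintype.prod_sum_type]

lemma prod_mem_smoothNumbers_of_mem_powerBox {N : ℕ} (hI : ∀ n ∈ I, n ∈ Nat.smoothNumbers N)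
    (hI' : ∀ n ∈ I', n ∈ Nat.smoothNumbers N) {a : Fin k ⊕ Fin l → ℕ}
    (ha : a ∈ powerBox k l I I') : ∏ i, a i ∈ Nat.smoothNumbers N :=
  prod_induction _ (· ∈ Nat.smoothNumbers N) (fun _ _ => Nat.mul_mem_smoothNumbers)
    (Nat.mem_smoothNumbers'.mpr fun _ hp h => absurd (Nat.dvd_one.mp h) hp.ne_one)
    fun i _ => forall_of_mem_powerBox hI hI' ha i

lemma prod_mem_Icc_of_mem_powerBox {u u' v v' : ℕ} (hI : I ⊆ Icc u u') (hI' : I' ⊆ Icc v v')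
    {a : Fin k ⊕ Fin l → ℕ} (ha : a ∈ powerBox k l I I') :
    ∏ i, a i ∈ Icc (u ^ k * v ^ l) (u' ^ k * v' ^ l) := by
  obtain ⟨hleft, hright⟩ := mem_powerBox.mp ha
  have hl i := mem_Icc.mp (hI (hleft i))
  have hr j := mem_Icc.mp (hI' (hright j))
  rw [Fintype.prod_sum_type, mem_Icc]
  constructor
  · simpa using Nat.mul_le_mul (prod_le_prod' (s := univ) fun i _ => (hl i).1)
      (prod_le_prod' (s := univ) fun j _ => (hr j).1)
  · simpa using Nat.mul_le_mul (prod_le_prod' (s := univ) fun i _ => (hl i).2)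
      (prod_le_prod' (s := univ) fun j _ => (hr j).2)

end SwapSolutions

section SecondMoment

/-- The sum of the Steinhaus random multiplicative function over a finite set `I` of integers. -/
noncomputable def steinhausSum (y : ℕ) (ω : Fin (y + 1) → ℝ) (I : Finset ℕ) : ℂ :=
  ∑ n ∈ I, steinhausF y ω n

lemma steinhausSum_pow_mul_pow {y k l : ℕ} (ω : Fin (y + 1) → ℝ) {I I' : Finset ℕ} (hI : 0 ∉ I)
    (hI' : 0 ∉ I') :
    steinhausSum y ω I ^ k * steinhausSum y ω I' ^ l =
      ∑ a ∈ powerBox k l I I', steinhausF y ω (∏ i, a i) := by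
  rw [steinhausSum, steinhausSum, ← sum_powerBox_prod]
  refine sum_congr rfl fun a ha => (steinhausF_prod y ω _ fun i _ => ?_).symm
  exact forall_of_mem_powerBox (P := (· ≠ 0)) (fun n hn h => hI (h ▸ hn))
    (fun n hn h => hI' (h ▸ hn)) ha i

lemma integral_norm_sum_steinhausSum_sq {σ : Type*} {y : ℕ} (k l : ℕ) {s : Finset σ}
    {I : σ → Finset ℕ} (hI : ∀ x ∈ s, ∀ n ∈ I x, n ∈ Nat.smoothNumbers (y + 1)) :
    ∫ ω, ‖∑ x ∈ s, steinhausSum y ω (I x) ^ k * starRingEnd ℂ (steinhausSum y ω (I x)) ^ l‖ ^ 2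
        ∂steinhausMeasure y =
      ∑ x ∈ s, ∑ x' ∈ s, (#(swapSolutions k l (I x) (I x')) : ℝ) := by
  have hI0 : ∀ x ∈ s, 0 ∉ I x := fun x hx h => (hI x hx 0 h).1 rfl
  -- Both conjugates change sides: this is what swaps the exponents of `x` and `x'`.
  have hexpand : ∀ x ∈ s, ∀ x' ∈ s, ∀ ω,
      (steinhausSum y ω (I x) ^ k * starRingEnd ℂ (steinhausSum y ω (I x)) ^ l) *
        starRingEnd ℂ
          (steinhausSum y ω (I x') ^ k * starRingEnd ℂ (steinhausSum y ω (I x')) ^ l) =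
      (∑ a ∈ powerBox k l (I x) (I x'), steinhausF y ω (∏ i, a i)) *
        starRingEnd ℂ (∑ b ∈ powerBox k l (I x') (I x), steinhausF y ω (∏ i, b i)) := by
    intro x hx x' hx' ω
    rw [← steinhausSum_pow_mul_pow ω (hI0 x hx) (hI0 x' hx'),
      ← steinhausSum_pow_mul_pow ω (hI0 x' hx') (hI0 x hx)]
    simp only [map_mul, map_pow, Complex.conj_conj]
    ring
  apply Complex.ofReal_injective
  rw [integral_norm_sum_sq fun x hx x' hx' => by
    simpa only [hexpand x hx x' hx'] using integrable_sum_steinhausF_mul_conj_sum y _ _ _ _]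
  push_cast
  refine sum_congr rfl fun x hx => sum_congr rfl fun x' hx' => ?_
  simp only [hexpand x hx x' hx']
  exact integral_sum_steinhausF_mul_conj_sum
    (fun a ha => prod_mem_smoothNumbers_of_mem_powerBox (hI x hx) (hI x' hx') ha)
    fun b hb => prod_mem_smoothNumbers_of_mem_powerBox (hI x' hx') (hI x hx) hb

lemma integral_norm_mean_AHf_sq (X k l : ℕ) (H : ℕ → ℕ) :
    ∫ ω, ‖((X : ℂ))⁻¹ * ∑ x ∈ Icc 1 X,
        (AHf X H ω x) ^ k * (starRingEnd ℂ (AHf X H ω x)) ^ l‖ ^ 2 ∂steinhausMeasure (X + H X) =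
      ((X : ℝ) ^ 2 * (H X : ℝ) ^ (k + l))⁻¹ * ∑ x ∈ Icc 1 X, ∑ x' ∈ Icc 1 X,
        (#(swapSolutions k l (Ioc x (x + H X)) (Ioc x' (x' + H X))) : ℝ) := by
  let S (ω : Fin (X + H X + 1) → ℝ) (x : ℕ) : ℂ := steinhausSum (X + H X) ω (Ioc x (x + H X))
  have hsum (ω : Fin (X + H X + 1) → ℝ) :
      ∑ x ∈ Icc 1 X, (AHf X H ω x) ^ k * (starRingEnd ℂ (AHf X H ω x)) ^ l =
        (((Real.sqrt (H X))⁻¹ ^ (k + l) : ℝ) : ℂ) *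
          ∑ x ∈ Icc 1 X, S ω x ^ k * starRingEnd ℂ (S ω x) ^ l := by
    rw [mul_sum]
    refine sum_congr rfl fun x _ => ?_
    have hA : AHf X H ω x = ((Real.sqrt (H X) : ℂ))⁻¹ * S ω x := rfl
    rw [hA, map_mul, map_inv₀, Complex.conj_ofReal]
    push_cast
    ring
  have hscale : ((X : ℝ)⁻¹ * (Real.sqrt (H X))⁻¹ ^ (k + l)) ^ 2 =
      ((X : ℝ) ^ 2 * (H X : ℝ) ^ (k + l))⁻¹ := by
    rw [mul_pow, pow_right_comm, inv_pow, inv_pow, Real.sq_sqrt (Nat.cast_nonneg _), inv_pow,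
      mul_inv]
  have hnorm (ω : Fin (X + H X + 1) → ℝ) :
      ‖((X : ℂ))⁻¹ * ∑ x ∈ Icc 1 X, (AHf X H ω x) ^ k * (starRingEnd ℂ (AHf X H ω x)) ^ l‖ ^ 2 =
        ((X : ℝ) ^ 2 * (H X : ℝ) ^ (k + l))⁻¹ *
          ‖∑ x ∈ Icc 1 X, S ω x ^ k * starRingEnd ℂ (S ω x) ^ l‖ ^ 2 := by
    rw [hsum, norm_mul, norm_mul, norm_inv, Complex.norm_natCast, Complex.norm_real,
      Real.norm_of_nonneg (by positivity), ← mul_assoc, mul_pow, hscale]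
  simp only [hnorm]
  rw [integral_const_mul, integral_norm_sum_steinhausSum_sq k l]
  intro x hx n hn
  rw [mem_Icc] at hx
  rw [mem_Ioc] at hn
  exact Nat.mem_smoothNumbers_of_lt (by omega) (by omega)

end SecondMoment

section Divisors

lemma card_divisors_mul_le (m n : ℕ) : #(m * n).divisors ≤ #m.divisors * #n.divisors := by
  rw [Nat.divisors_mul]
  exact card_mul_le

lemma card_divisors_prod_le {ι : Type*} (s : Finset ι) (a : ι → ℕ) :
    #(∏ i ∈ s, a i).divisors ≤ ∏ i ∈ s, #(a i).divisors :=
  le_prod_of_submultiplicative (fun n : ℕ => #n.divisors) (by simp) card_divisors_mul_le s a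

lemma sum_Ioc_arithmeticFunction_mul_le {R : Type*} [Semiring R] [PartialOrder R]
    [IsOrderedRing R] {f g : ArithmeticFunction R} (hf : ∀ n, 0 ≤ f n) (hg : ∀ n, 0 ≤ g n)
    (N : ℕ) :
    ∑ n ∈ Ioc 0 N, (f * g) n ≤ (∑ n ∈ Ioc 0 N, f n) * ∑ n ∈ Ioc 0 N, g n := by
  rw [ArithmeticFunction.sum_Ioc_mul_eq_sum_prod_filter, sum_mul_sum, ← sum_product']
  exact sum_le_sum_of_subset_of_nonneg (filter_subset _ _) fun p _ _ => mul_nonneg (hf _) (hg _)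

/-- The arithmetic function `d(n) ^ m / n`, with `d` the number of divisors. Its partial sums are
the logarithmic moments of `d`. -/
noncomputable def divisorWeight (m : ℕ) : ArithmeticFunction ℝ :=
  ⟨fun n => (#n.divisors : ℝ) ^ m / n, by simp⟩

lemma divisorWeight_apply (m n : ℕ) : divisorWeight m n = (#n.divisors : ℝ) ^ m / n := rfl

lemma divisorWeight_nonneg (m n : ℕ) : 0 ≤ divisorWeight m n := by
  rw [divisorWeight_apply]
  positivity

lemma divisorWeight_mul_le (m a b : ℕ) :
    divisorWeight m (a * b) ≤ divisorWeight m a * divisorWeight m b := by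
  simp only [divisorWeight_apply]
  rw [div_mul_div_comm, ← mul_pow, Nat.cast_mul]
  gcongr
  exact_mod_cast card_divisors_mul_le a b

lemma divisorWeight_succ_le (m n : ℕ) :
    divisorWeight (m + 1) n ≤ (divisorWeight m * divisorWeight m) n := by
  rw [ArithmeticFunction.mul_apply]
  calc divisorWeight (m + 1) n = ∑ e ∈ n.divisorsAntidiagonal, divisorWeight m (e.1 * e.2) := by
        rw [sum_congr rfl fun e he => by rw [(Nat.mem_divisorsAntidiagonal.mp he).1], sum_const,
          ← Nat.map_div_right_divisors, card_map, nsmul_eq_mul, divisorWeight_apply,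
          divisorWeight_apply]
        ring
    _ ≤ _ := sum_le_sum fun e _ => divisorWeight_mul_le m e.1 e.2

lemma sum_divisorWeight_le (m N : ℕ) :
    ∑ n ∈ Ioc 0 N, divisorWeight m n ≤ (1 + Real.log N) ^ 2 ^ m := by
  induction m with
  | zero =>
    have hharmonic := harmonic_le_one_add_log N
    rw [harmonic_eq_sum_Icc] at hharmonic
    push_cast at hharmonic
    have hIcc : Icc 1 N = Ioc 0 N := rfl
    simpa [divisorWeight_apply, hIcc] using hharmonic
  | succ m ih =>
    calc ∑ n ∈ Ioc 0 N, divisorWeight (m + 1) n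
        ≤ ∑ n ∈ Ioc 0 N, (divisorWeight m * divisorWeight m) n :=
          sum_le_sum fun n _ => divisorWeight_succ_le m n
      _ ≤ (∑ n ∈ Ioc 0 N, divisorWeight m n) * ∑ n ∈ Ioc 0 N, divisorWeight m n :=
          sum_Ioc_arithmeticFunction_mul_le (divisorWeight_nonneg m) (divisorWeight_nonneg m) N
      _ ≤ ((1 + Real.log N) ^ 2 ^ m) * (1 + Real.log N) ^ 2 ^ m :=
          mul_self_le_mul_self (sum_nonneg fun n _ => divisorWeight_nonneg m n) ih
      _ = (1 + Real.log N) ^ 2 ^ (m + 1) := by rw [← pow_add, ← two_mul, ← pow_succ']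

lemma sum_card_divisors_pow_le (m N : ℕ) :
    ∑ n ∈ Ioc 0 N, (#n.divisors : ℝ) ^ m ≤ N * (1 + Real.log N) ^ 2 ^ m := by
  refine le_trans ?_ (mul_le_mul_of_nonneg_left (sum_divisorWeight_le m N) N.cast_nonneg)
  rw [mul_sum]
  refine sum_le_sum fun n hn => ?_
  rw [mem_Ioc] at hn
  rw [divisorWeight_apply, mul_div_assoc', le_div_iff₀ (by exact_mod_cast hn.1), mul_comm]
  gcongr
  exact hn.2

lemma card_swapSolutions_le {I I' : Finset ℕ} (k l : ℕ) (hI : 0 ∉ I) (hI' : 0 ∉ I') :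
    #(swapSolutions k l I I') ≤
      (∑ n ∈ I, #n.divisors ^ (k + l)) ^ k * (∑ n ∈ I', #n.divisors ^ (k + l)) ^ l := by
  rw [← sum_powerBox_prod, swapSolutions, card_filter, sum_product]
  refine sum_le_sum fun a ha => ?_
  have ha0 : ∏ i, a i ≠ 0 := prod_ne_zero_iff.mpr fun i _ =>
    forall_of_mem_powerBox (P := (· ≠ 0)) (fun n hn h => hI (h ▸ hn)) (fun n hn h => hI' (h ▸ hn))
      ha i
  rw [← card_filter]
  calc #{b ∈ powerBox k l I' I | ∏ i, a i = ∏ i, b i}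
      ≤ #(Fintype.piFinset fun _ : Fin k ⊕ Fin l => (∏ i, a i).divisors) := by
        refine card_le_card fun b hb => Fintype.mem_piFinset.mpr fun i => ?_
        rw [Nat.mem_divisors, (mem_filter.mp hb).2]
        exact ⟨dvd_prod_of_mem b (mem_univ i), (mem_filter.mp hb).2 ▸ ha0⟩
    _ = #(∏ i, a i).divisors ^ (k + l) := by simp
    _ ≤ (∏ i, #(a i).divisors) ^ (k + l) := Nat.pow_le_pow_left (card_divisors_prod_le _ _) _
    _ = ∏ i, #(a i).divisors ^ (k + l) := (prod_pow _ _ _).symm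

end Divisors

section ShortIntervals

lemma sum_Ioc_sum_Ioc_le {g : ℕ → ℝ} (hg : ∀ n, 0 ≤ g n) (h M : ℕ) :
    ∑ x ∈ Ioc 0 M, ∑ n ∈ Ioc x (x + h), g n ≤ h * ∑ n ∈ Ioc 0 (M + h), g n := by
  have hswap : ∑ x ∈ Ioc 0 M, ∑ n ∈ Ioc x (x + h), g n =
      ∑ n ∈ Ioc 0 (M + h), ∑ x ∈ Ioc 0 M with n ∈ Ioc x (x + h), g n :=
    sum_comm' fun x n => by simp only [mem_filter, mem_Ioc]; omega
  rw [hswap, mul_sum]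
  refine sum_le_sum fun n _ => ?_
  rw [sum_const, nsmul_eq_mul]
  have hcard : #{x ∈ Ioc 0 M | n ∈ Ioc x (x + h)} ≤ h :=
    calc #{x ∈ Ioc 0 M | n ∈ Ioc x (x + h)} ≤ #(Ico (n - h) n) :=
          card_le_card fun x => by simp only [mem_filter, mem_Ioc, mem_Ico]; omega
      _ ≤ h := by rw [Nat.card_Ico]; omega
  exact mul_le_mul_of_nonneg_right (Nat.cast_le.mpr hcard) (hg n)

lemma sum_Ioc_sum_Ioc_pow_le {f : ℕ → ℝ} (hf : ∀ n, 0 ≤ f n) (r h M : ℕ) :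
    ∑ x ∈ Ioc 0 M, (∑ n ∈ Ioc x (x + h), f n) ^ r ≤
      h ^ r * ∑ n ∈ Ioc 0 (M + h), f n ^ r := by
  rcases r with _ | s
  · simp
  calc ∑ x ∈ Ioc 0 M, (∑ n ∈ Ioc x (x + h), f n) ^ (s + 1)
      ≤ ∑ x ∈ Ioc 0 M, (h : ℝ) ^ s * ∑ n ∈ Ioc x (x + h), f n ^ (s + 1) :=
        sum_le_sum fun x _ => by
          simpa using pow_sum_le_card_mul_sum_pow (s := Ioc x (x + h)) (fun n _ => hf n) s
    _ ≤ (h : ℝ) ^ s * (h * ∑ n ∈ Ioc 0 (M + h), f n ^ (s + 1)) := by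
        rw [← mul_sum]
        gcongr
        exact sum_Ioc_sum_Ioc_le (fun n => pow_nonneg (hf n) _) h M
    _ = _ := by ring

/-- The `r`-th power of the sum of `d(n) ^ r` over `(x, x + h]`: the bound which the divisor
estimate gives for the number of solutions attached to `x` and a nearby point, with `r = k + l`. -/
def divisorBound (r h x : ℕ) : ℝ := (∑ n ∈ Ioc x (x + h), (#n.divisors : ℝ) ^ r) ^ r

lemma divisorBound_nonneg (r h x : ℕ) : 0 ≤ divisorBound r h x := by
  unfold divisorBound
  positivity

lemma sum_divisorBound_le (r h M : ℕ) :
    ∑ x ∈ Ioc 0 M, divisorBound r h x ≤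
      h ^ r * (((M + h : ℕ) : ℝ) * (1 + Real.log (M + h : ℕ)) ^ 2 ^ r ^ 2) := by
  refine (sum_Ioc_sum_Ioc_pow_le (fun n => by positivity) r h M).trans ?_
  simp only [← pow_mul, ← sq]
  gcongr
  exact sum_card_divisors_pow_le _ _

lemma pow_mul_pow_le_add {a b : ℝ} (ha : 0 ≤ a) (hb : 0 ≤ b) (k l : ℕ) :
    a ^ k * b ^ l ≤ a ^ (k + l) + b ^ (k + l) := by
  rcases le_total a b with hab | hab
  · calc a ^ k * b ^ l ≤ b ^ k * b ^ l := by gcongr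
      _ = b ^ (k + l) := (pow_add _ _ _).symm
      _ ≤ _ := le_add_of_nonneg_left (by positivity)
  · calc a ^ k * b ^ l ≤ a ^ k * a ^ l := by gcongr
      _ = a ^ (k + l) := (pow_add _ _ _).symm
      _ ≤ _ := le_add_of_nonneg_right (by positivity)

lemma card_swapSolutions_Ioc_le (k l h x x' : ℕ) :
    (#(swapSolutions k l (Ioc x (x + h)) (Ioc x' (x' + h))) : ℝ) ≤
      divisorBound (k + l) h x + divisorBound (k + l) h x' := by
  refine le_trans ?_ (pow_mul_pow_le_add (by positivity) (by positivity) k l)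
  exact_mod_cast card_swapSolutions_le (I := Ioc x (x + h)) (I' := Ioc x' (x' + h)) k l
    (by simp) (by simp)

end ShortIntervals

section NearPairs

lemma mul_one_add_div_pow_le {u h : ℝ} (hh : 0 ≤ h) (hu : 0 < u) (hhu : h ≤ u) (r : ℕ) :
    u * (1 + h / u) ^ r ≤ u + 2 ^ r * h := by
  have ht0 : 0 ≤ h / u := by positivity
  have ht1 : h / u ≤ 1 := (div_le_one hu).mpr hhu
  have hconvex : (1 + h / u) ^ r ≤ 1 + 2 ^ r * (h / u) := by
    have h2 := (convexOn_pow (𝕜 := ℝ) r).2 (Set.mem_Ici.mpr zero_le_one)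
      (Set.mem_Ici.mpr zero_le_two) (sub_nonneg.mpr ht1) ht0 (sub_add_cancel 1 (h / u))
    simp only [smul_eq_mul, one_pow, mul_one] at h2
    calc (1 + h / u) ^ r = (1 - h / u + h / u * 2) ^ r := by ring
      _ ≤ 1 - h / u + h / u * 2 ^ r := h2
      _ ≤ 1 + 2 ^ r * (h / u) := by linarith
  calc u * (1 + h / u) ^ r ≤ u * (1 + 2 ^ r * (h / u)) := by gcongr
    _ = u + 2 ^ r * h := by field_simp

lemma le_mul_one_add_div_pow {u v h : ℝ} {k l : ℕ} (hlk : l < k) (hh : 0 ≤ h) (hu : 0 < u)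
    (huv : u ≤ v) (hle : v ^ k * u ^ l ≤ (u + h) ^ k * (v + h) ^ l) :
    v ≤ u * (1 + h / u) ^ (k + l) := by
  obtain ⟨d, rfl⟩ := Nat.exists_eq_add_of_le hlk.le
  have hv : 0 < v := hu.trans_le huv
  have hu_add : u + h = u * (1 + h / u) := by field_simp
  have hv_add : v + h ≤ v * (1 + h / u) := by
    rw [mul_one_add, mul_div_left_comm]
    gcongr
    exact le_mul_of_one_le_right hh ((one_le_div hu).mpr huv)
  have hbalance : (v / u) ^ d ≤ (1 + h / u) ^ (l + d + l) := by
    rw [div_pow, div_le_iff₀ (by positivity)]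
    refine le_of_mul_le_mul_left ?_ (by positivity : 0 < v ^ l * u ^ l)
    calc v ^ l * u ^ l * v ^ d = v ^ (l + d) * u ^ l := by ring
      _ ≤ (u + h) ^ (l + d) * (v + h) ^ l := hle
      _ ≤ (u * (1 + h / u)) ^ (l + d) * (v * (1 + h / u)) ^ l := by rw [hu_add]; gcongr
      _ = v ^ l * u ^ l * ((1 + h / u) ^ (l + d + l) * u ^ d) := by
        rw [mul_pow, mul_pow]
        ring
  rw [← div_le_iff₀' hu]
  exact (le_self_pow₀ ((one_le_div hu).mpr huv) (by omega)).trans hbalance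

lemma le_add_of_pow_mul_pow_le {u v h : ℝ} {k l : ℕ} (hlk : l < k) (hh : 0 ≤ h) (hu : 0 < u)
    (hhu : h ≤ u) (hle : v ^ k * u ^ l ≤ (u + h) ^ k * (v + h) ^ l) :
    v ≤ u + 2 ^ (k + l) * h := by
  rcases le_total v u with hvu | huv
  · exact hvu.trans (le_add_of_nonneg_right (by positivity))
  · exact (le_mul_one_add_div_pow hlk hh hu huv hle).trans (mul_one_add_div_pow_le hh hu hhu _)

/-- The pairs of starting points allowed to contribute to the second moment: two points within
`C * h` of each other, or at least one of them below `h`. In the latter range the size of a product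
of elements of `(x, x + h]` does not determine `x` well enough to compare the two points. -/
def NearPair (C h x x' : ℕ) : Prop :=
  x < h ∨ x' < h ∨ (x ≤ x' + C * h ∧ x' ≤ x + C * h)

instance (C h x x' : ℕ) : Decidable (NearPair C h x x') :=
  inferInstanceAs (Decidable (_ ∨ _ ∨ _ ∧ _))

lemma nearPair_comm {C h x x' : ℕ} : NearPair C h x x' ↔ NearPair C h x' x := by
  unfold NearPair
  tauto

lemma nearPair_of_swapSolutions_nonempty {k l h x x' : ℕ} (hlk : l < k) (hh : 0 < h)
    (hne : (swapSolutions k l (Ioc x (x + h)) (Ioc x' (x' + h))).Nonempty) :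
    NearPair (2 ^ (k + l)) h x x' := by
  obtain ⟨⟨a, b⟩, hab⟩ := hne
  simp only [swapSolutions, mem_filter, mem_product] at hab
  obtain ⟨⟨ha, hb⟩, hprod⟩ := hab
  have ha := mem_Icc.mp (prod_mem_Icc_of_mem_powerBox Ioc_subset_Icc_self Ioc_subset_Icc_self ha)
  have hb := mem_Icc.mp (prod_mem_Icc_of_mem_powerBox Ioc_subset_Icc_self Ioc_subset_Icc_self hb)
  rw [← hprod] at hb
  have hclose {u v : ℕ} (hu : h ≤ u) (huv : v ^ k * u ^ l ≤ (u + h) ^ k * (v + h) ^ l) :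
      v ≤ u + 2 ^ (k + l) * h := by
    have := le_add_of_pow_mul_pow_le (u := u) (v := v) (h := h) hlk h.cast_nonneg
      (by exact_mod_cast hh.trans_le hu) (by exact_mod_cast hu) (by exact_mod_cast huv)
    exact_mod_cast this
  rcases lt_or_ge x h with hx | hx
  · exact Or.inl hx
  rcases lt_or_ge x' h with hx' | hx'
  · exact Or.inr (Or.inl hx')
  exact Or.inr (Or.inr ⟨hclose hx' (ha.1.trans hb.2), hclose hx (hb.1.trans ha.2)⟩)

lemma card_nearPair_le (C X : ℕ) {h x : ℕ} (hh : 0 < h) (hx : h ≤ x) :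
    #{x' ∈ Ioc 0 X | NearPair C h x x'} ≤ (2 * C + 2) * h := by
  have hsub : {x' ∈ Ioc 0 X | NearPair C h x x'} ⊆ range h ∪ Icc (x - C * h) (x + C * h) := by
    intro x' hx'
    have hnear : NearPair C h x x' := (mem_filter.mp hx').2
    rw [mem_union, mem_range, mem_Icc]
    unfold NearPair at hnear
    omega
  calc #{x' ∈ Ioc 0 X | NearPair C h x x'}
      ≤ #(range h) + #(Icc (x - C * h) (x + C * h)) :=
        (card_le_card hsub).trans (card_union_le _ _)
    _ ≤ h + (2 * (C * h) + 1) := by rw [card_range, Nat.card_Icc]; omega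
    _ ≤ (2 * C + 2) * h := by linarith

lemma sum_sum_nearPair_le {w : ℕ → ℝ} (hw : ∀ x, 0 ≤ w x) (C X : ℕ) {h : ℕ} (hh : 0 < h) :
    ∑ x ∈ Ioc 0 X, ∑ x' ∈ Ioc 0 X with NearPair C h x x', w x ≤
      (2 * C + 2) * h * ∑ x ∈ Ioc 0 X, w x + X * ∑ x ∈ Ioc 0 h, w x := by
  have hpoint : ∀ x ∈ Ioc 0 X, (∑ x' ∈ Ioc 0 X with NearPair C h x x', w x) ≤
      (2 * C + 2) * h * w x + X * if x ≤ h then w x else 0 := by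
    intro x _
    rw [sum_const, nsmul_eq_mul]
    have hwx := hw x
    rcases lt_or_ge x h with hx | hx
    · have hcard : (#{x' ∈ Ioc 0 X | NearPair C h x x'} : ℝ) ≤ X := by
        exact_mod_cast (card_filter_le _ _).trans (by simp)
      rw [if_pos hx.le]
      exact (mul_le_mul_of_nonneg_right hcard hwx).trans (le_add_of_nonneg_left (by positivity))
    · have hcard : (#{x' ∈ Ioc 0 X | NearPair C h x x'} : ℝ) ≤ (2 * C + 2) * h := by
        exact_mod_cast card_nearPair_le C X hh hx
      exact (mul_le_mul_of_nonneg_right hcard hwx).trans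
        (le_add_of_nonneg_right (by split_ifs <;> positivity))
  have hsub : {x ∈ Ioc 0 X | x ≤ h} ⊆ Ioc 0 h := fun x => by
    simp only [mem_filter, mem_Ioc]
    omega
  refine (sum_le_sum hpoint).trans ?_
  rw [sum_add_distrib, ← mul_sum, ← mul_sum, ← sum_filter]
  gcongr
  exact fun x _ _ => hw x

lemma sum_sum_nearPair_add_le {w : ℕ → ℝ} (hw : ∀ x, 0 ≤ w x) (C X : ℕ) {h : ℕ} (hh : 0 < h) :
    ∑ x ∈ Ioc 0 X, ∑ x' ∈ Ioc 0 X with NearPair C h x x', (w x + w x') ≤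
      2 * ((2 * C + 2) * h * ∑ x ∈ Ioc 0 X, w x + X * ∑ x ∈ Ioc 0 h, w x) := by
  have hsymm : ∑ x ∈ Ioc 0 X, ∑ x' ∈ Ioc 0 X with NearPair C h x x', w x' =
      ∑ x ∈ Ioc 0 X, ∑ x' ∈ Ioc 0 X with NearPair C h x x', w x :=
    sum_comm' fun x x' => by
      simp only [mem_filter, nearPair_comm (x := x)]
      tauto
  simp only [sum_add_distrib]
  rw [hsymm, ← two_mul]
  exact mul_le_mul_of_nonneg_left (sum_sum_nearPair_le hw C X hh) zero_le_two

end NearPairs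

section Asymptotics

lemma log_two_mul_natCast_nonneg (X : ℕ) : 0 ≤ Real.log (2 * X) := by
  exact_mod_cast Real.log_natCast_nonneg (2 * X)

lemma sum_divisorBound_le_of_le {r h M X : ℕ} (hM : 0 < M) (hhM : h ≤ M) (hMX : M ≤ X) :
    ∑ x ∈ Ioc 0 M, divisorBound r h x ≤
      h ^ r * (2 * M * (1 + Real.log (2 * X)) ^ 2 ^ r ^ 2) := by
  refine (sum_divisorBound_le r h M).trans ?_
  have := Real.log_natCast_nonneg (M + h)
  gcongr
  · exact_mod_cast (by omega : M + h ≤ 2 * M)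
  · exact_mod_cast (by omega : M + h ≤ 2 * X)

lemma sum_card_swapSolutions_le {k l h X : ℕ} (hlk : l < k) (hh : 0 < h) (hhX : h ≤ X) :
    ∑ x ∈ Ioc 0 X, ∑ x' ∈ Ioc 0 X,
        (#(swapSolutions k l (Ioc x (x + h)) (Ioc x' (x' + h))) : ℝ) ≤
      (2 ^ (k + l + 3) + 12) * h ^ (k + l + 1) * X *
        (1 + Real.log (2 * X)) ^ 2 ^ (k + l) ^ 2 := by
  set r := k + l
  set C := 2 ^ r with hC
  set L := (1 + Real.log (2 * X)) ^ 2 ^ r ^ 2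
  set N : ℕ → ℕ → ℝ := fun x x' => #(swapSolutions k l (Ioc x (x + h)) (Ioc x' (x' + h)))
  have : 0 ≤ L := pow_nonneg (add_nonneg zero_le_one (log_two_mul_natCast_nonneg X)) _
  have hnear : ∀ x x', N x x' ≠ 0 → NearPair C h x x' := fun x x' hN =>
    nearPair_of_swapSolutions_nonempty hlk hh (card_ne_zero.mp (Nat.cast_ne_zero.mp hN))
  calc ∑ x ∈ Ioc 0 X, ∑ x' ∈ Ioc 0 X, N x x'
      = ∑ x ∈ Ioc 0 X, ∑ x' ∈ Ioc 0 X with NearPair C h x x', N x x' :=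
        sum_congr rfl fun x _ => (sum_filter_of_ne fun x' _ => hnear x x').symm
    _ ≤ ∑ x ∈ Ioc 0 X, ∑ x' ∈ Ioc 0 X with NearPair C h x x',
          (divisorBound r h x + divisorBound r h x') :=
        sum_le_sum fun x _ => sum_le_sum fun x' _ => card_swapSolutions_Ioc_le k l h x x'
    _ ≤ 2 * ((2 * C + 2) * h * ∑ x ∈ Ioc 0 X, divisorBound r h x +
          X * ∑ x ∈ Ioc 0 h, divisorBound r h x) := by
        exact_mod_cast sum_sum_nearPair_add_le (divisorBound_nonneg r h) C X hh
    _ ≤ 2 * ((2 * C + 2) * h * (h ^ r * (2 * X * L)) + X * (h ^ r * (2 * h * L))) := by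
        gcongr
        · exact sum_divisorBound_le_of_le (hh.trans_le hhX) hhX le_rfl
        · exact sum_divisorBound_le_of_le hh le_rfl hhX
    _ = (2 ^ (r + 3) + 12) * h ^ (r + 1) * X * L := by
        rw [hC]
        push_cast
        ring

lemma integral_norm_mean_AHf_sq_le {k l X : ℕ} {H : ℕ → ℕ} (hlk : l < k) (hH : 0 < H X)
    (hHX : H X ≤ X) :
    ∫ ω, ‖((X : ℂ))⁻¹ * ∑ x ∈ Icc 1 X,
        (AHf X H ω x) ^ k * (starRingEnd ℂ (AHf X H ω x)) ^ l‖ ^ 2 ∂steinhausMeasure (X + H X) ≤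
      (2 ^ (k + l + 3) + 12) * ((1 + Real.log (2 * X)) ^ 2 ^ (k + l) ^ 2 * (H X / X)) := by
  have : (0 : ℝ) < H X := by exact_mod_cast hH
  have : (0 : ℝ) < X := by exact_mod_cast hH.trans_le hHX
  rw [integral_norm_mean_AHf_sq]
  calc _ ≤ ((X : ℝ) ^ 2 * (H X : ℝ) ^ (k + l))⁻¹ * ((2 ^ (k + l + 3) + 12) *
        (H X : ℝ) ^ (k + l + 1) * X * (1 + Real.log (2 * X)) ^ 2 ^ (k + l) ^ 2) :=
        mul_le_mul_of_nonneg_left (sum_card_swapSolutions_le hlk hH hHX) (by positivity)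
    _ = _ := by
        field_simp
        ring

lemma norm_sum_pow_mul_conj_pow_comm {σ : Type*} (s : Finset σ) (z : σ → ℂ) (k l : ℕ) :
    ‖∑ x ∈ s, z x ^ k * starRingEnd ℂ (z x) ^ l‖ =
      ‖∑ x ∈ s, z x ^ l * starRingEnd ℂ (z x) ^ k‖ := by
  rw [← Complex.norm_conj]
  simp only [map_sum, map_mul, map_pow, Complex.conj_conj, mul_comm]

lemma tendsto_log_natCast_atTop : Tendsto (fun X : ℕ => Real.log X) atTop atTop :=
  Real.tendsto_log_atTop.comp tendsto_natCast_atTop_atTop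

lemma eventually_le_of_eventually_le_mul_log_rpow {H : ℕ → ℕ} {c : ℝ} (hc : 0 ≤ c)
    (hH : ∀ᶠ X in atTop, (H X : ℝ) ≤ (X : ℝ) * Real.log X ^ (-c)) :
    ∀ᶠ X in atTop, H X ≤ X := by
  filter_upwards [hH, tendsto_log_natCast_atTop.eventually_ge_atTop 1] with X hX hlog
  have hle : (H X : ℝ) ≤ X := hX.trans <| mul_le_of_le_one_right X.cast_nonneg
    (Real.rpow_le_one_of_one_le_of_nonpos hlog (neg_nonpos.mpr hc))
  exact_mod_cast hle

lemma tendsto_log_pow_mul_div_zero {H : ℕ → ℕ} {m : ℕ}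
    (hH : ∀ᶠ X in atTop, (H X : ℝ) ≤ (X : ℝ) * Real.log X ^ (-(m + 1 : ℝ))) :
    Tendsto (fun X : ℕ => (1 + Real.log (2 * X)) ^ m * (H X / X)) atTop (nhds 0) := by
  have hlim : Tendsto (fun X : ℕ => 3 ^ m * (Real.log X)⁻¹) atTop (nhds 0) := by
    simpa using (tendsto_inv_atTop_zero.comp tendsto_log_natCast_atTop).const_mul (3 ^ m)
  refine squeeze_zero' (Eventually.of_forall fun X => ?_) ?_ hlim
  · have := log_two_mul_natCast_nonneg X
    positivity
  filter_upwards [hH, tendsto_log_natCast_atTop.eventually_ge_atTop 1, eventually_gt_atTop 0]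
    with X hX hlog hX0
  have hX0 : (0 : ℝ) < X := by exact_mod_cast hX0
  have hL : 1 + Real.log (2 * X) ≤ 3 * Real.log X := by
    rw [Real.log_mul two_ne_zero hX0.ne']
    linarith [Real.log_two_lt_d9]
  have hratio : (H X : ℝ) / X ≤ (Real.log X ^ (m + 1))⁻¹ := by
    rw [div_le_iff₀' hX0]
    refine hX.trans_eq ?_
    rw [Real.rpow_neg (by positivity)]
    exact_mod_cast rfl
  calc (1 + Real.log (2 * X)) ^ m * (H X / X)
      ≤ (3 * Real.log X) ^ m * (Real.log X ^ (m + 1))⁻¹ := by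
        have := log_two_mul_natCast_nonneg X
        gcongr
    _ = 3 ^ m * (Real.log X)⁻¹ := by
        field_simp
        ring

theorem stmt3_general (k l : ℕ) (hkl : k ≠ l) :
    ∃ c : ℝ, 0 < c ∧ ∀ H : ℕ → ℕ,
      (∀ᶠ X in atTop, 0 < H X) →
      (∀ᶠ X in atTop, (H X : ℝ) ≤ (X : ℝ) * Real.log X ^ (-c)) →
      Tendsto (fun X : ℕ =>
        ∫ ω, ‖((X : ℂ))⁻¹ * ∑ x ∈ Icc 1 X,
            (AHf X H ω x) ^ k * (starRingEnd ℂ (AHf X H ω x)) ^ l‖ ^ 2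
          ∂(steinhausMeasure (X + H X)))
        atTop (nhds 0) := by
  wlog hlk : l < k generalizing k l
  · simpa only [norm_mul, norm_sum_pow_mul_conj_pow_comm _ _ l k] using
      this l k hkl.symm (hkl.lt_of_le (not_lt.mp hlk))
  refine ⟨(2 ^ (k + l) ^ 2 : ℕ) + 1, by positivity, fun H hH hle => ?_⟩
  have hlim := (tendsto_log_pow_mul_div_zero hle).const_mul ((2 : ℝ) ^ (k + l + 3) + 12)
  rw [mul_zero] at hlim
  refine squeeze_zero' (Eventually.of_forall fun X => integral_nonneg fun ω => by positivity)
    ?_ hlim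
  filter_upwards [hH, eventually_le_of_eventually_le_mul_log_rpow (by positivity) hle]
    with X hX hXle
  exact integral_norm_mean_AHf_sq_le hlk hX hXle

end Asymptotics

/-- for all integers `k > ℓ ≥ 1` there is `c_{k,ℓ} > 0` such that for
every `H : ℕ → ℕ` with `H(X) → ∞` and `H(X) ≤ X·(log X)^{−c_{k,ℓ}}` for all large
`X`, `𝔼_f |(1/X) ∑_{x=1}^{X} A_H(f,x)^k · conj(A_H(f,x))^ℓ|² → 0` as `X → ∞`. -/
theorem stmt3 (k l : ℕ) (hl : 1 ≤ l) (hkl : l < k) :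
    ∃ c : ℝ, 0 < c ∧ ∀ H : ℕ → ℕ,
      Filter.Tendsto H Filter.atTop Filter.atTop →
      (∀ᶠ X in Filter.atTop, (H X : ℝ) ≤ (X : ℝ) * Real.log X ^ (-c)) →
      Filter.Tendsto (fun X : ℕ =>
        ∫ ω, ‖((X : ℂ))⁻¹ * ∑ x ∈ Finset.Icc 1 X,
            (AHf X H ω x) ^ k * (starRingEnd ℂ (AHf X H ω x)) ^ l‖ ^ 2
          ∂(steinhausMeasure (X + H X)))
        Filter.atTop (nhds 0) := by
  obtain ⟨c, hc, h⟩ := stmt3_general k l hkl.ne'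
  exact ⟨c, hc, fun H hH hle => h H (hH.eventually_gt_atTop 0) hle⟩
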